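/- arXiv:1107.4120 — 3 statements merged into one kernel-verified Lean document; each statement's English description precedes it below -/
import Mathlib

section
/- Let 𝐯 = (6,5,v₃) with v₃ ≥ 5 and 𝐤 = (2,1,1). Then D(𝐯,𝐤,2) = 13 if v₃ = 5, and D(𝐯,𝐤,2) = 15 if v₃ ≥ 6. -/
/-!
A packing with `𝐤 = (2,1,1)` and `t = 2` is a set of edges of `K₆`, each carrying a row and a
column, such that the edges of one row (or of one column) are pairwise disjoint and no two edges
agree in both row and column. Hence there are at most `15` blocks, and an explicit array with six
columns attains this (`array15`).

With five columns, `array13` gives `13`. Suppose that `14` edges were possible. A row has at most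
three edges, so every row has at least two, and these lie in a unique perfect matching
(`exists_matching_of_coloring`). The five perfect matchings so obtained cover all edges but at most
one; since every vertex has degree five, they form a 1-factorization of `K₆`
(`cover_eq_one`). The same holds for the columns. Any two 1-factorizations of `K₆`
share a perfect matching (`factorizations_meet`). At least two of the three edges of a common
perfect matching are used, and they agree in row and column, a contradiction (`no_fourteen`).
-/

open Finset

/-- A `t`-`(𝐯,𝐤,λ)` generalized packing: a multiset of blocks `B` with `|B i| = k i`,
such that for every `(𝐤,t)`-admissible tuple `t'` and every tuple of sets `T` with
`|T i| = t' i`, at most `lam` blocks contain `T` componentwise. -/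
def IsGenPacking {ι : Type} [Fintype ι] [DecidableEq ι] (t lam : ℕ) (v k : ι → ℕ)
    (P : Multiset (∀ i : ι, Finset (Fin (v i)))) : Prop :=
  (∀ B ∈ P, ∀ i, (B i).card = k i) ∧
  ∀ t' : ι → ℕ, (∀ i, t' i ≤ k i) → (∑ i, t' i) = t →
    ∀ T : ∀ i : ι, Finset (Fin (v i)), (∀ i, (T i).card = t' i) →
      (P.filter (fun B => ∀ i, T i ⊆ B i)).card ≤ lam

/-- The generalized packing number `D_λ(𝐯,𝐤,t)`. -/
noncomputable def genPackingNumber (ι : Type) [Fintype ι] [DecidableEq ι] (t lam : ℕ) (v k : ι → ℕ) : ℕ :=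
  sSup {N | ∃ P, IsGenPacking t lam v k P ∧ Multiset.card P = N}

/-- The ordinary packing number `D_λ(v,k,t)`, as the case `m = 1`. -/
noncomputable def ordPackingNumber (v k t lam : ℕ) : ℕ :=
  genPackingNumber (Fin 1) t lam (fun _ => v) (fun _ => k)

/-! ### Perfect matchings of `K₆` -/

/-- The edges of `K₆`. -/
def edges6 : Finset (Finset (Fin 6)) := powersetCard 2 univ

/-- The fifteen perfect matchings of `K₆`; those containing the edge `{0, k + 1}` are
`pm (k, 0)`, `pm (k, 1)`, `pm (k, 2)`. -/
def pm (m : Fin 5 × Fin 3) : Finset (Finset (Fin 6)) :=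
  (![![{{0, 1}, {2, 3}, {4, 5}}, {{0, 1}, {2, 4}, {3, 5}}, {{0, 1}, {2, 5}, {3, 4}}],
     ![{{0, 2}, {1, 3}, {4, 5}}, {{0, 2}, {1, 4}, {3, 5}}, {{0, 2}, {1, 5}, {3, 4}}],
     ![{{0, 3}, {1, 2}, {4, 5}}, {{0, 3}, {1, 4}, {2, 5}}, {{0, 3}, {1, 5}, {2, 4}}],
     ![{{0, 4}, {1, 2}, {3, 5}}, {{0, 4}, {1, 3}, {2, 5}}, {{0, 4}, {1, 5}, {2, 3}}],
     ![{{0, 5}, {1, 2}, {3, 4}}, {{0, 5}, {1, 3}, {2, 4}}, {{0, 5}, {1, 4}, {2, 3}}]] :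
    Fin 5 → Fin 3 → Finset (Finset (Fin 6))) m.1 m.2

lemma pm_subset : ∀ m, pm m ⊆ edges6 := by decide +kernel

lemma pm_card : ∀ m, (pm m).card = 3 := by decide +kernel

lemma pm_vertex : ∀ m, ∀ v : Fin 6, ((pm m).filter (v ∈ ·)).card = 1 := by decide +kernel

lemma pm_index : ∀ m, ∀ k : Fin 5, ({0, k.succ} : Finset (Fin 6)) ∈ pm m → m.1 = k := by
  decide +kernel

lemma star_mem : ∀ k : Fin 5, ({0, k.succ} : Finset (Fin 6)) ∈ edges6 := by decide +kernel

lemma edges6_vertex : ∀ v : Fin 6, (edges6.filter (v ∈ ·)).card = 5 := by decide +kernel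

lemma exists_pm_of_disjoint : ∀ a ∈ edges6, ∀ b ∈ edges6, Disjoint a b →
    ∃ m, a ∈ pm m ∧ b ∈ pm m ∧ (a ∪ b)ᶜ ∈ pm m := by decide +kernel

/-- Any two 1-factorizations of `K₆` have a perfect matching in common. A 1-factorization is
given by choosing, for every `k`, one of the three perfect matchings containing `{0, k + 1}`. -/
lemma factorizations_meet : ∀ s : Fin 5 → Fin 3,
    (∀ k l, k ≠ l → Disjoint (pm (k, s k)) (pm (l, s l))) → ∀ t : Fin 5 → Fin 3,
    (∀ k l, k ≠ l → Disjoint (pm (k, t k)) (pm (l, t l))) → ∃ k, s k = t k := by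
  decide +kernel

/-! ### Five perfect matchings covering at least fourteen edges -/

lemma cover_degree (M : Fin 5 → Fin 5 × Fin 3) (v : Fin 6) :
    ∑ e ∈ edges6.filter (v ∈ ·), (univ.filter fun i => e ∈ pm (M i)).card = 5 := by
  have h := Finset.sum_card_bipartiteAbove_eq_sum_card_bipartiteBelow
    (s := edges6.filter (v ∈ ·)) (t := (univ : Finset (Fin 5))) (fun e i => e ∈ pm (M i))
  simp only [Finset.bipartiteAbove, Finset.bipartiteBelow] at h
  rw [h]
  have : ∀ i ∈ (univ : Finset (Fin 5)),
      ((edges6.filter (v ∈ ·)).filter fun e => e ∈ pm (M i)).card = 1 := by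
    intro i _
    rw [← pm_vertex (M i) v]
    congr 1
    ext e
    simp only [mem_filter]
    constructor
    · rintro ⟨⟨_, h2⟩, h3⟩; exact ⟨h3, h2⟩
    · rintro ⟨h3, h2⟩; exact ⟨⟨pm_subset _ h3, h2⟩, h3⟩
  rw [Finset.sum_congr rfl this]
  simp

/-- Five perfect matchings covering all edges but possibly `e₀` form a 1-factorization: they cover
every edge exactly once, `e₀` included. At a vertex outside `e₀` five edges are covered by five
matchings, hence once each; comparing degrees at a vertex of `e₀` then settles `e₀` itself. -/
lemma cover_eq_one (M : Fin 5 → Fin 5 × Fin 3) (e₀ : Finset (Fin 6)) (he₀ : e₀ ∈ edges6)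
    (h : ∀ e ∈ edges6, e ≠ e₀ → ∃ i, e ∈ pm (M i)) :
    ∀ e ∈ edges6, (univ.filter fun i => e ∈ pm (M i)).card = 1 := by
  have hpos : ∀ e ∈ edges6, e ≠ e₀ → 1 ≤ (univ.filter fun i => e ∈ pm (M i)).card := by
    intro e he hne
    obtain ⟨i, hi⟩ := h e he hne
    exact Finset.card_pos.2 ⟨i, by simpa using hi⟩
  have hout : ∀ v ∉ e₀, ∀ e ∈ edges6, v ∈ e →
      (univ.filter fun i => e ∈ pm (M i)).card = 1 := by
    intro v hv e he hve
    have hsum : ∑ e ∈ edges6.filter (v ∈ ·), 1 =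
        ∑ e ∈ edges6.filter (v ∈ ·), (univ.filter fun i => e ∈ pm (M i)).card := by
      rw [cover_degree, ← Finset.card_eq_sum_ones, edges6_vertex]
    have hle : ∀ e ∈ edges6.filter (v ∈ ·), 1 ≤ (univ.filter fun i => e ∈ pm (M i)).card := by
      intro e he
      rw [mem_filter] at he
      exact hpos e he.1 (fun hh => hv (hh ▸ he.2))
    exact (((Finset.sum_eq_sum_iff_of_le hle).1 hsum) e (mem_filter.2 ⟨he, hve⟩)).symm
  have hne : ∀ e ∈ edges6, e ≠ e₀ →
      (univ.filter fun i => e ∈ pm (M i)).card = 1 := by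
    intro e he hne
    have : ¬ e ⊆ e₀ := fun hs => hne <| Finset.eq_of_subset_of_card_le hs (by
      rw [edges6, mem_powersetCard] at he he₀; omega)
    obtain ⟨v, hv, hv'⟩ := Finset.not_subset.1 this
    exact hout v hv' e he hv
  intro e he
  by_cases hee : e = e₀
  · subst hee
    have hcard : e.card = 2 := (mem_powersetCard.1 he).2
    obtain ⟨v, hv⟩ := Finset.card_pos.1 (by omega : 0 < e.card)
    have hmem : e ∈ edges6.filter (v ∈ ·) := mem_filter.2 ⟨he, hv⟩
    have h1 := cover_degree M v
    rw [← Finset.add_sum_erase _ _ hmem] at h1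
    have h2 : ∑ x ∈ (edges6.filter (v ∈ ·)).erase e,
        (univ.filter fun i => x ∈ pm (M i)).card = 4 := by
      rw [Finset.sum_congr rfl (g := fun _ => 1)]
      · rw [← Finset.card_eq_sum_ones, Finset.card_erase_of_mem hmem, edges6_vertex]
      · intro x hx
        rw [mem_erase, mem_filter] at hx
        exact hne x hx.2.1 hx.1
    omega
  · exact hne e he hee

/-- Version of `factorizations_meet` for 1-factorizations given as five perfect matchings in any
order that cover every edge exactly once. -/
lemma covers_meet (M N : Fin 5 → Fin 5 × Fin 3)
    (hM : ∀ e ∈ edges6, (univ.filter fun i => e ∈ pm (M i)).card = 1)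
    (hN : ∀ e ∈ edges6, (univ.filter fun i => e ∈ pm (N i)).card = 1) :
    ∃ i j, M i = N j := by
  have key : ∀ M : Fin 5 → Fin 5 × Fin 3,
      (∀ e ∈ edges6, (univ.filter fun i => e ∈ pm (M i)).card = 1) →
      ∃ s : Fin 5 → Fin 3, (∀ k, ∃ i, M i = (k, s k)) ∧
        ∀ k l, k ≠ l → Disjoint (pm (k, s k)) (pm (l, s l)) := by
    intro M hM
    have h1 : ∀ k : Fin 5, ∃ i, (M i).1 = k := by
      intro k
      obtain ⟨i, hi⟩ := Finset.card_pos.1 (by rw [hM _ (star_mem k)]; norm_num)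
      exact ⟨i, pm_index _ _ (mem_filter.1 hi).2⟩
    choose a ha using h1
    have haM : ∀ k, M (a k) = (k, (M (a k)).2) := fun k => Prod.ext (ha k) rfl
    refine ⟨fun k => (M (a k)).2, fun k => ⟨a k, haM k⟩, fun k l hkl => ?_⟩
    rw [← haM k, ← haM l, Finset.disjoint_left]
    intro e hk hl
    have : a k = a l := Finset.card_le_one.1 (hM e (pm_subset _ hk)).le _
      (mem_filter.2 ⟨mem_univ _, hk⟩) _ (mem_filter.2 ⟨mem_univ _, hl⟩)
    exact hkl (by rw [← ha k, ← ha l, this])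
  obtain ⟨s, hs, hsd⟩ := key M hM
  obtain ⟨t, ht, htd⟩ := key N hN
  obtain ⟨k, hk⟩ := factorizations_meet s hsd t htd
  obtain ⟨i, hi⟩ := hs k
  obtain ⟨j, hj⟩ := ht k
  exact ⟨i, j, by rw [hi, hj, hk]⟩

/-! ### Proper colourings of at least fourteen edges with five colours -/

/-- In a proper colouring of at least `14` edges with `5` colours, each colour class is contained
in a perfect matching. Classes have at most three edges, hence at least two. -/
lemma exists_matching_of_coloring (U : Finset (Finset (Fin 6))) (hU : U ⊆ edges6)
    (hcard : 14 ≤ U.card) (f : Finset (Fin 6) → Fin 5)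
    (hf : ∀ a ∈ U, ∀ b ∈ U, f a = f b → a ≠ b → Disjoint a b) :
    ∃ M : Fin 5 → Fin 5 × Fin 3, ∀ e ∈ U, e ∈ pm (M (f e)) := by
  have hle : ∀ i, (U.filter (f · = i)).card ≤ 3 := by
    intro i
    have h1 : ((U.filter (f · = i)).biUnion id).card = ∑ e ∈ U.filter (f · = i), e.card := by
      apply Finset.card_biUnion
      intro a ha b hb hab
      rw [mem_coe, mem_filter] at ha hb
      exact hf a ha.1 b hb.1 (ha.2.trans hb.2.symm) hab
    rw [Finset.sum_congr rfl (g := fun _ => 2)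
      (fun e he => (mem_powersetCard.1 (hU (mem_filter.1 he).1)).2)] at h1
    have h2 := Finset.card_le_univ ((U.filter (f · = i)).biUnion id)
    simp only [Finset.sum_const, smul_eq_mul, Fintype.card_fin] at h1 h2
    omega
  have hge : ∀ i, 1 < (U.filter (f · = i)).card := by
    intro i
    have h1 := Finset.card_eq_sum_card_fiberwise (f := f) (s := U) (t := univ)
      (fun _ _ => by simp)
    rw [← Finset.add_sum_erase _ _ (mem_univ i)] at h1
    have h2 := Finset.sum_le_card_nsmul (univ.erase i) (fun j => (U.filter (f · = j)).card) 3
      (fun j _ => hle j)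
    simp only [card_erase_of_mem (mem_univ i), card_univ, Fintype.card_fin, smul_eq_mul] at h2
    omega
  have hex : ∀ i, ∃ m, ∀ e ∈ U, f e = i → e ∈ pm m := by
    intro i
    obtain ⟨a, ha, b, hb, hab⟩ := Finset.one_lt_card.1 (hge i)
    rw [mem_filter] at ha hb
    have hdis := hf a ha.1 b hb.1 (ha.2.trans hb.2.symm) hab
    obtain ⟨m, hma, hmb, hmc⟩ := exists_pm_of_disjoint a (hU ha.1) b (hU hb.1) hdis
    refine ⟨m, fun e he hei => ?_⟩
    by_cases hea : e = a
    · rwa [hea]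
    by_cases heb : e = b
    · rwa [heb]
    have hd1 := hf e he a ha.1 (hei.trans ha.2.symm) hea
    have hd2 := hf e he b hb.1 (hei.trans hb.2.symm) heb
    have hsub : e ⊆ (a ∪ b)ᶜ := by
      rw [Finset.subset_compl_iff_disjoint_right, Finset.disjoint_union_right]
      exact ⟨hd1, hd2⟩
    have hce := (mem_powersetCard.1 (hU he)).2
    have hca := (mem_powersetCard.1 (hU ha.1)).2
    have hcb := (mem_powersetCard.1 (hU hb.1)).2
    have : e = (a ∪ b)ᶜ := Finset.eq_of_subset_of_card_le hsub (by
      rw [Finset.card_compl, Finset.card_union_of_disjoint hdis, hca, hcb, hce]; simp)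
    rwa [this]
  choose M hM using hex
  exact ⟨M, fun e he => hM _ e he rfl⟩

/-- There are no two orthogonal proper colourings with five colours of fourteen edges of `K₆`. -/
lemma no_fourteen (U : Finset (Finset (Fin 6))) (hU : U ⊆ edges6) (hcard : 14 ≤ U.card)
    (f g : Finset (Fin 6) → Fin 5)
    (hf : ∀ a ∈ U, ∀ b ∈ U, f a = f b → a ≠ b → Disjoint a b)
    (hg : ∀ a ∈ U, ∀ b ∈ U, g a = g b → a ≠ b → Disjoint a b)
    (hfg : ∀ a ∈ U, ∀ b ∈ U, f a = f b → g a = g b → a = b) : False := by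
  have hdiff : (edges6 \ U).card ≤ 1 := by
    rw [Finset.card_sdiff_of_subset hU]
    have : edges6.card = 15 := by simp [edges6]; rfl
    omega
  obtain ⟨e₀, he₀, hmem⟩ : ∃ e₀ ∈ edges6, ∀ e ∈ edges6, e ≠ e₀ → e ∈ U := by
    by_cases h : (edges6 \ U).Nonempty
    · obtain ⟨e₀, h₀⟩ := h
      refine ⟨e₀, (mem_sdiff.1 h₀).1, fun e he hne => ?_⟩
      by_contra hn
      exact hne (Finset.card_le_one.1 hdiff _ (mem_sdiff.2 ⟨he, hn⟩) _ h₀)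
    · refine ⟨_, star_mem 0, fun e he _ => ?_⟩
      by_contra hn
      exact h ⟨e, mem_sdiff.2 ⟨he, hn⟩⟩
  obtain ⟨M, hM⟩ := exists_matching_of_coloring U hU hcard f hf
  obtain ⟨N, hN⟩ := exists_matching_of_coloring U hU hcard g hg
  have hM1 := cover_eq_one M e₀ he₀ fun e he hne => ⟨_, hM e (hmem e he hne)⟩
  have hN1 := cover_eq_one N e₀ he₀ fun e he hne => ⟨_, hN e (hmem e he hne)⟩
  obtain ⟨i, j, hij⟩ := covers_meet M N hM1 hN1
  have hfi : ∀ e ∈ U, e ∈ pm (M i) → f e = i := fun e he hei =>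
    Finset.card_le_one.1 (hM1 e (hU he)).le _ (mem_filter.2 ⟨mem_univ _, hM e he⟩) _
      (mem_filter.2 ⟨mem_univ _, hei⟩)
  have hgj : ∀ e ∈ U, e ∈ pm (N j) → g e = j := fun e he hej =>
    Finset.card_le_one.1 (hN1 e (hU he)).le _ (mem_filter.2 ⟨mem_univ _, hN e he⟩) _
      (mem_filter.2 ⟨mem_univ _, hej⟩)
  have h2 : 1 < ((pm (M i)).erase e₀).card := by
    have := Finset.pred_card_le_card_erase (s := pm (M i)) (a := e₀)
    rw [pm_card] at this
    omega
  obtain ⟨a, ha, b, hb, hab⟩ := Finset.one_lt_card.1 h2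
  rw [mem_erase] at ha hb
  have haU := hmem a (pm_subset _ ha.2) ha.1
  have hbU := hmem b (pm_subset _ hb.2) hb.1
  exact hab (hfg a haU b hbU (by rw [hfi a haU ha.2, hfi b hbU hb.2])
    (by rw [hgj a haU (hij ▸ ha.2), hgj b hbU (hij ▸ hb.2)]))

/-! ### Packings in terms of pairs of blocks -/

lemma IsGenPacking.card_le_one {ι : Type} [Fintype ι] [DecidableEq ι] {v k : ι → ℕ}
    {P S : Multiset (∀ i : ι, Finset (Fin (v i)))} (hP : IsGenPacking 2 1 v k P)
    (T : ∀ i, Finset (Fin (v i))) (hT : ∑ i, (T i).card = 2) (hk : ∀ i, (T i).card ≤ k i)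
    (hS : S ≤ P) (hTS : ∀ B ∈ S, ∀ i, T i ⊆ B i) : Multiset.card S ≤ 1 :=
  (Multiset.card_le_card (Multiset.le_filter.2 ⟨hS, hTS⟩)).trans
    (hP.2 (fun i => (T i).card) hk hT T fun _ => rfl)

/-- Two blocks of a `2-(𝐯,𝐤,1)` packing with a common tuple of sets of total size two coincide. -/
lemma IsGenPacking.eq_of_subset {ι : Type} [Fintype ι] [DecidableEq ι] {v k : ι → ℕ}
    {P : Multiset (∀ i : ι, Finset (Fin (v i)))} (hP : IsGenPacking 2 1 v k P)
    {B C : ∀ i, Finset (Fin (v i))} (hB : B ∈ P) (hC : C ∈ P) (T : ∀ i, Finset (Fin (v i)))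
    (hT : ∑ i, (T i).card = 2) (hTB : ∀ i, T i ⊆ B i) (hTC : ∀ i, T i ⊆ C i) : B = C := by
  by_contra hne
  have hsub : ({B, C} : Multiset _) ≤ P := by
    rw [Multiset.le_iff_subset (by simpa using hne)]
    intro D hD
    simp only [Multiset.insert_eq_cons, Multiset.mem_cons, Multiset.mem_singleton] at hD
    rcases hD with rfl | rfl <;> assumption
  have := hP.card_le_one T hT (fun i => (Finset.card_le_card (hTB i)).trans (hP.1 B hB i).le)
    hsub (by
      intro D hD
      simp only [Multiset.insert_eq_cons, Multiset.mem_cons, Multiset.mem_singleton] at hD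
      rcases hD with rfl | rfl <;> assumption)
  simp at this

/-- A set of blocks of the right sizes, two of which never share more than one point, is a
`2-(𝐯,𝐤,1)` packing. -/
lemma isGenPacking_of_inter {ι : Type} [Fintype ι] [DecidableEq ι] {v k : ι → ℕ}
    {P : Multiset (∀ i : ι, Finset (Fin (v i)))} (hnd : P.Nodup)
    (hk : ∀ B ∈ P, ∀ i, (B i).card = k i)
    (h : ∀ B ∈ P, ∀ C ∈ P, B ≠ C → ∑ i, (B i ∩ C i).card < 2) : IsGenPacking 2 1 v k P := by
  refine ⟨hk, fun t' _ ht T hT => ?_⟩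
  by_contra hlt
  have hnd' := hnd.filter (fun B => ∀ i, T i ⊆ B i)
  have h1 : 1 < (⟨_, hnd'⟩ : Finset _).card := not_le.1 hlt
  obtain ⟨B, hB, C, hC, hBC⟩ := Finset.one_lt_card.1 h1
  have hB' := Multiset.mem_filter.1 (Finset.mem_mk.1 hB)
  have hC' := Multiset.mem_filter.1 (Finset.mem_mk.1 hC)
  have h2 : ∑ i, t' i ≤ ∑ i, (B i ∩ C i).card := Finset.sum_le_sum fun i _ => by
    rw [← hT i]
    exact Finset.card_le_card (Finset.subset_inter (hB'.2 i) (hC'.2 i))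
  have := h B hB'.1 C hC'.1 hBC
  omega

/-! ### Constructions -/

/-- The block with edge `e`, row `r` and column `c`. -/
def blk {v : ℕ} (e : Finset (Fin 6)) (r : Fin 5) (c : Fin v) :
    ∀ i : Fin 3, Finset (Fin (![6, 5, v] i))
  | 0 => e
  | 1 => ({r} : Finset (Fin 5))
  | 2 => ({c} : Finset (Fin v))

/-- A list of edges with rows and columns in which no two entries share two points gives a
packing for every number of columns `v ≥ n`. -/
lemma exists_packing_of_list {n v : ℕ} (hnv : n ≤ v)
    (L : List (Finset (Fin 6) × Fin 5 × Fin n)) (hL : ∀ x ∈ L, x.1.card = 2)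
    (hpw : L.Pairwise fun x y => (x.1 ∩ y.1).card + (({x.2.1} : Finset (Fin 5)) ∩ {y.2.1}).card +
      (({x.2.2} : Finset (Fin n)) ∩ {y.2.2}).card < 2) :
    ∃ P, IsGenPacking 2 1 ![6, 5, v] ![2, 1, 1] P ∧ Multiset.card P = L.length := by
  let b : Finset (Fin 6) × Fin 5 × Fin n → ∀ i : Fin 3, Finset (Fin (![6, 5, v] i)) :=
    fun x => blk x.1 x.2.1 (Fin.castLE hnv x.2.2)
  have hsum : ∀ x y, ∑ i, (b x i ∩ b y i).card = (x.1 ∩ y.1).card +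
      (({x.2.1} : Finset (Fin 5)) ∩ {y.2.1}).card +
      (({x.2.2} : Finset (Fin n)) ∩ {y.2.2}).card := by
    intro x y
    rw [Fin.sum_univ_three]
    have h3 : (({Fin.castLE hnv x.2.2} : Finset (Fin v)) ∩ {Fin.castLE hnv y.2.2}).card =
        (({x.2.2} : Finset (Fin n)) ∩ {y.2.2}).card := by
      by_cases h : x.2.2 = y.2.2
      · simp [h]
      · rw [Finset.singleton_inter_of_notMem, Finset.singleton_inter_of_notMem]
        · simp
        · simpa using h
        · simpa using h
    rw [← h3]
    rfl
  have hcard : ∀ x ∈ L, ∀ i, (b x i).card = (![2, 1, 1] : Fin 3 → ℕ) i := by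
    intro x hx i
    fin_cases i
    · exact hL x hx
    · rfl
    · rfl
  have hpw' : (L.map b).Pairwise fun B C => ∑ i, (B i ∩ C i).card < 2 := by
    rw [List.pairwise_map]
    exact hpw.imp fun h => by rwa [hsum]
  have hk : ∀ B ∈ L.map b, ∀ i, (B i).card = (![2, 1, 1] : Fin 3 → ℕ) i := by
    intro B hB
    obtain ⟨x, hx, rfl⟩ := List.mem_map.1 hB
    exact hcard x hx
  refine ⟨(L.map b : List _), isGenPacking_of_inter ?_ hk ?_, by simp⟩
  · rw [Multiset.coe_nodup]
    refine hpw'.imp_of_mem fun {B C} hB _ h hBC => ?_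
    subst hBC
    simp only [Finset.inter_self, hk B hB, Fin.sum_univ_three] at h
    simp at h
  · intro B hB C hC hne
    have : Std.Symm fun B C : ∀ i : Fin 3, Finset (Fin (![6, 5, v] i)) =>
        ∑ i, (B i ∩ C i).card < 2 := ⟨fun B C h => by simpa only [Finset.inter_comm] using h⟩
    exact hpw'.forall hB hC hne

/-- Thirteen edges in a `5 × 5` array. -/
def array13 : List (Finset (Fin 6) × Fin 5 × Fin 5) :=
  [({0, 1}, 0, 0), ({0, 2}, 1, 1), ({0, 3}, 2, 2), ({0, 4}, 3, 3), ({0, 5}, 4, 4),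
   ({1, 2}, 2, 3), ({1, 3}, 1, 4), ({1, 4}, 4, 1), ({1, 5}, 3, 2), ({2, 3}, 3, 0),
   ({2, 4}, 0, 2), ({3, 5}, 0, 1), ({4, 5}, 1, 0)]

/-- All fifteen edges of `K₆` in a `5 × 6` array. -/
def array15 : List (Finset (Fin 6) × Fin 5 × Fin 6) :=
  [({0, 1}, 0, 0), ({0, 2}, 1, 1), ({0, 3}, 2, 2), ({0, 4}, 3, 3), ({0, 5}, 4, 4),
   ({1, 2}, 2, 3), ({1, 3}, 3, 1), ({1, 4}, 4, 2), ({1, 5}, 1, 5), ({2, 3}, 4, 0),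
   ({2, 4}, 0, 5), ({2, 5}, 3, 2), ({3, 4}, 1, 4), ({3, 5}, 0, 3), ({4, 5}, 2, 0)]

lemma exists_packing_thirteen :
    ∃ P, IsGenPacking 2 1 ![6, 5, 5] ![2, 1, 1] P ∧ Multiset.card P = 13 :=
  exists_packing_of_list le_rfl array13 (by decide +kernel) (by decide +kernel)

lemma exists_packing_fifteen {v : ℕ} (hv : 6 ≤ v) :
    ∃ P, IsGenPacking 2 1 ![6, 5, v] ![2, 1, 1] P ∧ Multiset.card P = 15 :=
  exists_packing_of_list hv array15 (by decide +kernel) (by decide +kernel)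

/-! ### Upper bounds -/

/-- The edge (first component) of a block. -/
def edgeOf {v : ℕ} (B : ∀ i : Fin 3, Finset (Fin (![6, 5, v] i))) : Finset (Fin 6) := B 0

/-- Different blocks of a packing have different edges; in particular no block is repeated. -/
lemma nodup_edges {v : ℕ} {P : Multiset (∀ i : Fin 3, Finset (Fin (![6, 5, v] i)))}
    (hP : IsGenPacking 2 1 ![6, 5, v] ![2, 1, 1] P) : (P.map edgeOf).Nodup := by
  rw [Multiset.nodup_iff_count_le_one]
  intro e
  rw [Multiset.count_map]
  by_cases he : e.card = 2
  · let T : ∀ i : Fin 3, Finset (Fin (![6, 5, v] i))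
      | 0 => e
      | 1 => (∅ : Finset (Fin 5))
      | 2 => (∅ : Finset (Fin v))
    refine hP.card_le_one T (by simpa [T, Fin.sum_univ_three] using he) (fun i => ?_)
      (Multiset.filter_le _ _) (fun B hB i => ?_)
    · fin_cases i
      · exact he.le
      · exact Nat.zero_le _
      · exact Nat.zero_le _
    fin_cases i
    · exact (Multiset.mem_filter.1 hB).2.le
    · exact Finset.empty_subset _
    · exact Finset.empty_subset _
  · rw [Multiset.filter_eq_nil.2]
    · simp
    · rintro B hB rfl
      exact he (hP.1 B hB 0)

lemma edges_subset {v : ℕ} {P : Multiset (∀ i : Fin 3, Finset (Fin (![6, 5, v] i)))}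
    (hP : IsGenPacking 2 1 ![6, 5, v] ![2, 1, 1] P) : (P.map edgeOf).toFinset ⊆ edges6 := by
  intro e he
  obtain ⟨B, hB, rfl⟩ := Multiset.mem_map.1 (Multiset.mem_toFinset.1 he)
  exact mem_powersetCard.2 ⟨Finset.subset_univ _, hP.1 B hB 0⟩

lemma card_edges {v : ℕ} {P : Multiset (∀ i : Fin 3, Finset (Fin (![6, 5, v] i)))}
    (hP : IsGenPacking 2 1 ![6, 5, v] ![2, 1, 1] P) :
    (P.map edgeOf).toFinset.card = Multiset.card P := by
  rw [Multiset.toFinset_card_of_nodup (nodup_edges hP), Multiset.card_map]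

lemma card_le_fifteen {v : ℕ} {P : Multiset (∀ i : Fin 3, Finset (Fin (![6, 5, v] i)))}
    (hP : IsGenPacking 2 1 ![6, 5, v] ![2, 1, 1] P) : Multiset.card P ≤ 15 := by
  rw [← card_edges hP]
  exact (Finset.card_le_card (edges_subset hP)).trans (by decide +kernel)

lemma card_le_thirteen {P : Multiset (∀ i : Fin 3, Finset (Fin (![6, 5, 5] i)))}
    (hP : IsGenPacking 2 1 ![6, 5, 5] ![2, 1, 1] P) : Multiset.card P ≤ 13 := by
  by_contra hlt
  have hex : ∀ e : Finset (Fin 6), ∃ r c : Fin 5, e ∈ (P.map edgeOf).toFinset → blk e r c ∈ P := by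
    intro e
    by_cases he : e ∈ (P.map edgeOf).toFinset
    · obtain ⟨B, hB, rfl⟩ := Multiset.mem_map.1 (Multiset.mem_toFinset.1 he)
      obtain ⟨r, hr⟩ := Finset.card_eq_one.1 (hP.1 B hB 1)
      obtain ⟨c, hc⟩ := Finset.card_eq_one.1 (hP.1 B hB 2)
      refine ⟨r, c, fun _ => ?_⟩
      have : blk (edgeOf B) r c = B := by
        funext i
        fin_cases i
        · rfl
        · exact hr.symm
        · exact hc.symm
      exact Eq.subst (motive := (· ∈ P)) this.symm hB
    · exact ⟨0, 0, fun h => absurd h he⟩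
  choose f g hfg using hex
  have hedge : ∀ {a b : Finset (Fin 6)} {r s c d : Fin 5},
      blk a r c = blk b s d → a = b := fun h => congrFun h 0
  refine no_fourteen _ (edges_subset hP) (by rw [card_edges hP]; omega) f g ?_ ?_ ?_
  · intro a ha b hb hab hne
    rw [Finset.disjoint_left]
    intro x hxa hxb
    let T : ∀ i : Fin 3, Finset (Fin (![6, 5, 5] i))
      | 0 => ({x} : Finset (Fin 6))
      | 1 => ({f a} : Finset (Fin 5))
      | 2 => (∅ : Finset (Fin 5))
    refine hne (hedge (hP.eq_of_subset (hfg a ha) (hfg b hb) T rfl ?_ ?_))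
    · intro i
      fin_cases i
      · exact Finset.singleton_subset_iff.2 hxa
      · exact Finset.Subset.refl _
      · exact Finset.empty_subset _
    · intro i
      fin_cases i
      · exact Finset.singleton_subset_iff.2 hxb
      · exact Finset.singleton_subset_iff.2 (Finset.mem_singleton.2 hab)
      · exact Finset.empty_subset _
  · intro a ha b hb hab hne
    rw [Finset.disjoint_left]
    intro x hxa hxb
    let T : ∀ i : Fin 3, Finset (Fin (![6, 5, 5] i))
      | 0 => ({x} : Finset (Fin 6))
      | 1 => (∅ : Finset (Fin 5))
      | 2 => ({g a} : Finset (Fin 5))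
    refine hne (hedge (hP.eq_of_subset (hfg a ha) (hfg b hb) T rfl ?_ ?_))
    · intro i
      fin_cases i
      · exact Finset.singleton_subset_iff.2 hxa
      · exact Finset.empty_subset _
      · exact Finset.Subset.refl _
    · intro i
      fin_cases i
      · exact Finset.singleton_subset_iff.2 hxb
      · exact Finset.empty_subset _
      · exact Finset.singleton_subset_iff.2 (Finset.mem_singleton.2 hab)
  · intro a ha b hb hab hab'
    let T : ∀ i : Fin 3, Finset (Fin (![6, 5, 5] i))
      | 0 => (∅ : Finset (Fin 6))
      | 1 => ({f a} : Finset (Fin 5))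
      | 2 => ({g a} : Finset (Fin 5))
    refine hedge (hP.eq_of_subset (hfg a ha) (hfg b hb) T rfl ?_ ?_)
    · intro i
      fin_cases i
      · exact Finset.empty_subset _
      · exact Finset.Subset.refl _
      · exact Finset.Subset.refl _
    · intro i
      fin_cases i
      · exact Finset.empty_subset _
      · exact Finset.singleton_subset_iff.2 (Finset.mem_singleton.2 hab)
      · exact Finset.singleton_subset_iff.2 (Finset.mem_singleton.2 hab')

lemma genPackingNumber_eq {v k : Fin 3 → ℕ} {N : ℕ}
    (h1 : ∃ P, IsGenPacking 2 1 v k P ∧ Multiset.card P = N)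
    (h2 : ∀ P, IsGenPacking 2 1 v k P → Multiset.card P ≤ N) :
    genPackingNumber (Fin 3) 2 1 v k = N :=
  IsGreatest.csSup_eq ⟨h1, by rintro _ ⟨P, hP, rfl⟩; exact h2 P hP⟩

/-- for `𝐯 = (6,5,v₃)` with `v₃ ≥ 5` and `𝐤 = (2,1,1)`,
the packing number is `13` when `v₃ = 5` and `15` when `v₃ ≥ 6`. -/
theorem stmt16 (v₃ : ℕ) (h3 : 5 ≤ v₃) :
    genPackingNumber (Fin 3) 2 1 ![6, 5, v₃] ![2, 1, 1] = if v₃ = 5 then 13 else 15 := by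
  split_ifs with h
  · subst h
    exact genPackingNumber_eq exists_packing_thirteen fun P hP => card_le_thirteen hP
  · exact genPackingNumber_eq (exists_packing_fifteen (by omega)) fun P hP => card_le_fifteen hP
end

section
/- Let 𝐯 = (v₁,v₂,v₃) be positive integers with 2·v₂ < v₁ ≤ 2·v₃, and let 𝐤 = (2,1,1). Then D(𝐯,𝐤,2) = v₂·⌊v₁/2⌋. -/
/-!
The upper bound counts, for a fixed point `c` of `X₂`, the blocks through `c`: their pairs in `X₁`
are pairwise disjoint, so there are at most `⌊v₁/2⌋` of them.

For the lower bound put `n = ⌈v₁/2⌉`, so that `v₂ ≤ n - 1` and `n ≤ v₃`. A near-complete mapping of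
`ℤ/n` supplies `n - 1` rows `r`, with `δ r` distinct modulo `n` and `r + δ r` distinct modulo `n`
(for odd `n` one takes `δ r = r`; for even `n` one takes `δ r = r` on the first half and
`δ r = r + 1` on the second half). In the array indexed by `(r, b)` with entries `b - δ r` and
`b - δ r - r` modulo `n`, any two of the four quantities `r`, `b`, `b - δ r`, `b - δ r - r`
determine the other two. The blocks `({b - δ r, n + b}, {r}, {b - δ r - r})`, for `r < v₂` and
`b < ⌊v₁/2⌋`, therefore form a packing of the required size. Restricting to `b < ⌊v₁/2⌋` handles
odd `v₁`, where the point `2n - 1` is absent.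
-/

open Finset

/-- The shift of row `r`: a map on `{0, …, n - 2}` such that both `δ r` and `r + δ r` are
injective modulo `n`. -/
def rowShift (n r : ℕ) : ℕ := if n % 2 = 0 ∧ n ≤ 2 * r then r + 1 else r

/-- Subtraction modulo `n` of representatives in `{0, …, n - 1}`. -/
def subMod (n b s : ℕ) : ℕ := if s ≤ b then b - s else b + n - s

/-- The representative of `b - rowShift n r` modulo `n`. -/
def entryA (n r b : ℕ) : ℕ := subMod n b (rowShift n r)

/-- The representative of `b - rowShift n r - r` modulo `n`. -/
def entryD (n r b : ℕ) : ℕ := subMod n (entryA n r b) r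

section entries

variable {n r r' b b' : ℕ}

lemma rowShift_lt (hr : r + 1 < n) : rowShift n r < n := by
  unfold rowShift; split_ifs <;> omega

lemma subMod_lt {s : ℕ} (hb : b < n) (hs : s < n) : subMod n b s < n := by
  unfold subMod; split_ifs <;> omega

lemma entryA_lt (hr : r + 1 < n) (hb : b < n) : entryA n r b < n :=
  subMod_lt hb (rowShift_lt hr)

lemma entryD_lt (hr : r + 1 < n) (hb : b < n) : entryD n r b < n :=
  subMod_lt (entryA_lt hr hb) (by omega)

lemma subMod_left_inj {s : ℕ} (hb : b < n) (hb' : b' < n) (hs : s < n)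
    (h : subMod n b s = subMod n b' s) : b = b' := by
  unfold subMod at h; split_ifs at h <;> omega

lemma subMod_right_inj {s s' : ℕ} (hs : s < n) (hs' : s' < n)
    (h : subMod n b s = subMod n b s') : s = s' := by
  unfold subMod at h; split_ifs at h <;> omega

lemma entryA_inj_col (hr : r + 1 < n) (hb : b < n) (hb' : b' < n)
    (h : entryA n r b = entryA n r b') : b = b' :=
  subMod_left_inj hb hb' (rowShift_lt hr) h

lemma entryA_inj_row (hr : r + 1 < n) (hr' : r' + 1 < n)
    (h : entryA n r b = entryA n r' b) : r = r' := by
  have h := subMod_right_inj (rowShift_lt hr) (rowShift_lt hr') h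
  unfold rowShift at h; split_ifs at h <;> omega

lemma entryD_inj_col (hr : r + 1 < n) (hb : b < n) (hb' : b' < n)
    (h : entryD n r b = entryD n r b') : b = b' :=
  entryA_inj_col hr hb hb'
    (subMod_left_inj (entryA_lt hr hb) (entryA_lt hr hb') (by omega) h)

lemma entryD_inj_row (hr : r + 1 < n) (hr' : r' + 1 < n) (hb : b < n)
    (h : entryD n r b = entryD n r' b) : r = r' := by
  unfold entryD entryA subMod rowShift at h
  split_ifs at h <;> omega

lemma entry_pair_inj (hr : r + 1 < n) (hr' : r' + 1 < n) (hb : b < n) (hb' : b' < n)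
    (hA : entryA n r b = entryA n r' b') (hD : entryD n r b = entryD n r' b') :
    r = r' ∧ b = b' := by
  have h : r = r' := by
    unfold entryD at hD
    rw [← hA] at hD
    exact subMod_right_inj (by omega) (by omega) hD
  subst h
  exact ⟨rfl, entryA_inj_col hr hb hb' hA⟩

end entries

/-- Double counting of incidences between a multiset of finite sets and their points. -/
lemma sum_card_eq_sum_card_filter {α β : Type*} [Fintype β] [DecidableEq β]
    (f : α → Finset β) (P : Multiset α) :
    (P.map fun B => (f B).card).sum = ∑ x, (P.filter fun B => x ∈ f B).card := by
  induction P using Multiset.induction_on with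
  | empty => simp
  | cons a P ih =>
    have key : ∀ x, ((a ::ₘ P).filter fun B => x ∈ f B).card
        = (if x ∈ f a then 1 else 0) + (P.filter fun B => x ∈ f B).card := by
      intro x
      by_cases h : x ∈ f a
      · simp [h, add_comm]
      · simp [h]
    simp only [key, Finset.sum_add_distrib, Multiset.map_cons, Multiset.sum_cons, ih]
    simp

lemma sum_map_card_of_const {α β : Type*} (f : α → Finset β) (P : Multiset α) (k : ℕ)
    (h : ∀ B ∈ P, (f B).card = k) : (P.map fun B => (f B).card).sum = P.card * k := by
  rw [Multiset.map_congr rfl h]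
  simp

lemma card_filter_le_of_imp {α : Type*} {p q : α → Prop} {_ : DecidablePred p}
    {_ : DecidablePred q} (P : Multiset α) (h : ∀ a, p a → q a) : (P.filter p).card ≤ (P.filter q).card :=
  Multiset.card_le_card (Multiset.monotone_filter_right P h)

lemma card_filter_map_le_one {α β : Type*} [Fintype α] (f : α → β) (p : β → Prop)
    {_ : DecidablePred p}
    (h : ∀ a b, p (f a) → p (f b) → a = b) :
    (((Finset.univ : Finset α).val.map f).filter p).card ≤ 1 := by
  rw [Multiset.filter_map, Multiset.card_map, ← Finset.filter_val, Finset.card_val,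
    Finset.card_le_one]
  intro a ha b hb
  exact h a b (Finset.mem_filter.1 ha).2 (Finset.mem_filter.1 hb).2

/-- A triple of sets, as a dependent tuple over `Fin 3`. -/
def triple {v₁ v₂ v₃ : ℕ} (S₁ : Finset (Fin v₁)) (S₂ : Finset (Fin v₂)) (S₃ : Finset (Fin v₃)) :
    ∀ i : Fin 3, Finset (Fin (![v₁, v₂, v₃] i))
  | 0 => S₁
  | 1 => S₂
  | 2 => S₃

/-- The first component of a block, typed over `Fin v₁`. -/
def part₁ {v₁ v₂ v₃ : ℕ} (B : ∀ i : Fin 3, Finset (Fin (![v₁, v₂, v₃] i))) : Finset (Fin v₁) := B 0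

/-- The second component of a block, typed over `Fin v₂`. -/
def part₂ {v₁ v₂ v₃ : ℕ} (B : ∀ i : Fin 3, Finset (Fin (![v₁, v₂, v₃] i))) : Finset (Fin v₂) := B 1

lemma packing_card_le {v₁ v₂ v₃ : ℕ} {P : Multiset (∀ i : Fin 3, Finset (Fin (![v₁, v₂, v₃] i)))}
    (hP : IsGenPacking 2 1 ![v₁, v₂, v₃] ![2, 1, 1] P) : P.card ≤ v₂ * (v₁ / 2) := by
  obtain ⟨hk, hT⟩ := hP
  have row : ∀ c : Fin v₂,
      (P.filter fun B => c ∈ part₂ B).card ≤ v₁ / 2 := by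
    intro c
    set Q := P.filter fun B => c ∈ part₂ B with hQ
    have h1 := sum_card_eq_sum_card_filter
      (part₁ (v₁ := v₁) (v₂ := v₂) (v₃ := v₃)) Q
    rw [sum_map_card_of_const part₁ Q 2
      (fun B hB => hk B (Multiset.mem_of_mem_filter hB) 0)] at h1
    have h2 : ∀ x : Fin v₁,
        (Q.filter fun B => x ∈ part₁ B).card ≤ 1 := by
      intro x
      have := hT ![1, 1, 0] (by intro i; fin_cases i <;> simp) (by simp [Fin.sum_univ_three])
        (triple {x} {c} ∅) (by intro i; fin_cases i <;> simp [triple])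
      rw [hQ, Multiset.filter_filter]
      refine le_trans (card_filter_le_of_imp P ?_) this
      rintro B ⟨hx, hc⟩ i
      fin_cases i
      · exact Finset.singleton_subset_iff.2 hx
      · exact Finset.singleton_subset_iff.2 hc
      · exact Finset.empty_subset _
    have h3 := Finset.sum_le_sum (s := Finset.univ) fun x _ => h2 x
    rw [← h1] at h3
    simp only [Finset.sum_const, Finset.card_univ, Fintype.card_fin, smul_eq_mul, mul_one] at h3
    omega
  have h1 := sum_card_eq_sum_card_filter
    (part₂ (v₁ := v₁) (v₂ := v₂) (v₃ := v₃)) P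
  rw [sum_map_card_of_const part₂ _ 1 (fun B hB => hk B hB 1), mul_one] at h1
  rw [h1]
  refine (Finset.sum_le_sum fun c _ => row c).trans ?_
  simp

lemma exists_packing {v₁ v₂ v₃ : ℕ} (hlo : 2 * v₂ < v₁) (hhi : v₁ ≤ 2 * v₃) :
    ∃ P, IsGenPacking 2 1 ![v₁, v₂, v₃] ![2, 1, 1] P ∧ P.card = v₂ * (v₁ / 2) := by
  obtain ⟨n, hn⟩ : ∃ n, n = (v₁ + 1) / 2 := ⟨_, rfl⟩
  have hr : ∀ r : Fin v₂, r.1 + 1 < n := fun r => by have := r.2; omega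
  have hb : ∀ b : Fin (v₁ / 2), b.1 < n := fun b => by have := b.2; omega
  have hA := fun (r : Fin v₂) (b : Fin (v₁ / 2)) => entryA_lt (hr r) (hb b)
  have hD := fun (r : Fin v₂) (b : Fin (v₁ / 2)) => entryD_lt (hr r) (hb b)
  let pA : Fin v₂ × Fin (v₁ / 2) → Fin v₁ := fun p =>
    ⟨entryA n p.1 p.2, by have := hA p.1 p.2; omega⟩
  let pB : Fin v₂ × Fin (v₁ / 2) → Fin v₁ := fun p => ⟨n + p.2, by have := p.2.2; omega⟩
  let pD : Fin v₂ × Fin (v₁ / 2) → Fin v₃ := fun p =>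
    ⟨entryD n p.1 p.2, by have := hD p.1 p.2; omega⟩
  have hAB : ∀ p q, pA p ≠ pB q := by
    intro p q h
    have h := congrArg Fin.val h
    have := hA p.1 p.2
    simp only [pA, pB] at h
    omega
  have eB : ∀ {p q}, pB p = pB q → p.2.1 = q.2.1 := by
    intro p q h
    have h := congrArg Fin.val h
    simp only [pB] at h
    omega
  have eA : ∀ {p q}, pA p = pA q → entryA n p.1 p.2 = entryA n q.1 q.2 :=
    fun h => congrArg Fin.val h
  have eD : ∀ {p q}, pD p = pD q → entryD n p.1 p.2 = entryD n q.1 q.2 :=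
    fun h => congrArg Fin.val h
  have mk : ∀ {p q : Fin v₂ × Fin (v₁ / 2)}, p.1.1 = q.1.1 → p.2.1 = q.2.1 → p = q :=
    fun h h' => Prod.ext (Fin.ext h) (Fin.ext h')
  let blk : Fin v₂ × Fin (v₁ / 2) → ∀ i : Fin 3, Finset (Fin (![v₁, v₂, v₃] i)) :=
    fun p => triple {pA p, pB p} {p.1} {pD p}
  -- A common point of two pairs plays the same role in both, as `pA < n ≤ pB`.
  have share : ∀ {p q : Fin v₂ × Fin (v₁ / 2)} {x : Fin v₁},
      x ∈ ({pA p, pB p} : Finset (Fin v₁)) → x ∈ ({pA q, pB q} : Finset (Fin v₁)) →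
      pA p = pA q ∨ pB p = pB q := by
    intro p q x hx hx'
    simp only [Finset.mem_insert, Finset.mem_singleton] at hx hx'
    rcases hx with rfl | rfl <;> rcases hx' with h | h
    · exact Or.inl h
    · exact absurd h (hAB _ _)
    · exact absurd h.symm (hAB _ _)
    · exact Or.inr h
  have inj12 : ∀ {p q : Fin v₂ × Fin (v₁ / 2)},
      pA p = pA q ∨ pB p = pB q → p.1 = q.1 → p = q := by
    intro p q h h1
    refine mk (congrArg _ h1) ?_
    rcases h with h | h
    · have := eA h
      rw [← h1] at this
      exact entryA_inj_col (hr _) (hb _) (hb _) this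
    · exact eB h
  have inj13 : ∀ {p q : Fin v₂ × Fin (v₁ / 2)},
      pA p = pA q ∨ pB p = pB q → pD p = pD q → p = q := by
    intro p q h hd
    rcases h with h | h
    · have := entry_pair_inj (hr _) (hr _) (hb _) (hb _) (eA h) (eD hd)
      exact mk this.1 this.2
    · have hd := eD hd
      rw [← eB h] at hd
      exact mk (entryD_inj_row (hr _) (hr _) (hb _) hd) (eB h)
  have inj23 : ∀ {p q : Fin v₂ × Fin (v₁ / 2)}, p.1 = q.1 → pD p = pD q → p = q := by
    intro p q h hd
    have hd := eD hd
    rw [← h] at hd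
    exact mk (congrArg _ h) (entryD_inj_col (hr _) (hb _) (hb _) hd)
  have inj11 : ∀ {p q : Fin v₂ × Fin (v₁ / 2)},
      ({pA p, pB p} : Finset (Fin v₁)) = {pA q, pB q} → p = q := by
    intro p q h
    have h1 : pA p ∈ ({pA q, pB q} : Finset (Fin v₁)) := h ▸ by simp
    have h2 : pB p ∈ ({pA q, pB q} : Finset (Fin v₁)) := h ▸ by simp
    simp only [Finset.mem_insert, Finset.mem_singleton] at h1 h2
    have h1 := h1.resolve_right (hAB _ _)
    have h2 := h2.resolve_left (fun h => hAB _ _ h.symm)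
    have h1 := eA h1
    rw [← eB h2] at h1
    exact mk (entryA_inj_row (hr _) (hr _) h1) (eB h2)
  refine ⟨(Finset.univ : Finset (Fin v₂ × Fin (v₁ / 2))).val.map blk, ⟨?_, ?_⟩, by simp⟩
  · intro B hB i
    obtain ⟨p, -, rfl⟩ := Multiset.mem_map.1 hB
    fin_cases i
    · exact Finset.card_pair (hAB p p)
    · exact Finset.card_singleton _
    · exact Finset.card_singleton _
  · intro t' ht' hsum T hT
    refine card_filter_map_le_one blk _ fun p q hp hq => ?_
    have a0 : t' 0 ≤ 2 := ht' 0
    have a1 : t' 1 ≤ 1 := ht' 1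
    have a2 : t' 2 ≤ 1 := ht' 2
    rw [Fin.sum_univ_three] at hsum
    have c0 : 0 < t' 0 → pA p = pA q ∨ pB p = pB q := by
      intro h
      rw [← hT 0, Finset.card_pos] at h
      obtain ⟨x, hx⟩ := h
      exact share (hp 0 hx) (hq 0 hx)
    have c1 : 0 < t' 1 → p.1 = q.1 := by
      intro h
      rw [← hT 1, Finset.card_pos] at h
      obtain ⟨x, hx⟩ := h
      exact (Finset.mem_singleton.1 (hp 1 hx)).symm.trans (Finset.mem_singleton.1 (hq 1 hx))
    have c2 : 0 < t' 2 → pD p = pD q := by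
      intro h
      rw [← hT 2, Finset.card_pos] at h
      obtain ⟨x, hx⟩ := h
      exact (Finset.mem_singleton.1 (hp 2 hx)).symm.trans (Finset.mem_singleton.1 (hq 2 hx))
    by_cases h1 : 0 < t' 1
    · by_cases h2 : 0 < t' 2
      · exact inj23 (c1 h1) (c2 h2)
      · exact inj12 (c0 (by omega)) (c1 h1)
    · by_cases h2 : 0 < t' 2
      · exact inj13 (c0 (by omega)) (c2 h2)
      · have h0 : (T 0).card = 2 := by rw [hT 0]; omega
        have full : ∀ s, T 0 = ({pA s, pB s} : Finset (Fin v₁)) ∨ ¬ T 0 ⊆ blk s 0 := by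
          intro s
          by_cases hs : T 0 ⊆ blk s 0
          · refine Or.inl (Finset.eq_of_subset_of_card_le hs ?_)
            rw [h0]
            exact Finset.card_le_two
          · exact Or.inr hs
        have fp := (full p).resolve_right (not_not.2 (hp 0))
        have fq := (full q).resolve_right (not_not.2 (hq 0))
        exact inj11 (fp.symm.trans fq)

/-- for `𝐯 = (v₁,v₂,v₃)` with `2v₂ < v₁ ≤ 2v₃` and `𝐤 = (2,1,1)`,
`D(𝐯,𝐤,2) = v₂·⌊v₁/2⌋`. -/
theorem stmt17 (v₁ v₂ v₃ : ℕ) (h2 : 1 ≤ v₂) (h3 : 1 ≤ v₃)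
    (hlo : 2 * v₂ < v₁) (hhi : v₁ ≤ 2 * v₃) :
    genPackingNumber (Fin 3) 2 1 ![v₁, v₂, v₃] ![2, 1, 1] = v₂ * (v₁ / 2) := by
  refine IsGreatest.csSup_eq ⟨exists_packing hlo hhi, ?_⟩
  rintro N ⟨P, hP, rfl⟩
  exact packing_card_le hP
end

section
/- Let 𝐯 = (4,8) and 𝐤 = (2,2). Then D(𝐯,𝐤,2) = 5. -/
/-!
A block is a pair of edges, one in `K₄` and one in `K₈`. The packing condition for `t = 2`, `λ = 1`
says that the `K₄`-edges of the blocks are distinct, the `K₈`-edges are distinct, and two blocks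
whose `K₄`-edges meet have disjoint `K₈`-edges.

Distinct `K₄`-edges give at most `6` blocks. If there were `6`, all edges of `K₄` would occur. For
each of the three perfect matchings of `K₄`, the two associated `K₈`-edges are distinct, so they
cover at least `3` points; edges from different matchings meet, so the three point sets are
disjoint, which would need `9 > 8` points (`no_six_edges`). Five blocks are attained by letting the
`K₈`-edges of two matchings overlap in one point and using only one edge of the third matching
(`optimalBlocks`).
-/

open Finset

/-- The pair `(a, b)` of subsets of the two point sets, as a dependent tuple. -/
def pairTuple (a : Finset (Fin 4)) (b : Finset (Fin 8)) :
    ∀ i : Fin 2, Finset (Fin (![4, 8] i))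
  | 0 => a
  | 1 => b

/-- The `K₄`-edge of a block. The definition fixes the type `Fin 4` of its points. -/
def fstEdge (B : ∀ i : Fin 2, Finset (Fin (![4, 8] i))) : Finset (Fin 4) := B 0

/-- The `K₈`-edge of a block. The definition fixes the type `Fin 8` of its points. -/
def sndEdge (B : ∀ i : Fin 2, Finset (Fin (![4, 8] i))) : Finset (Fin 8) := B 1

/-- A packing with five blocks. -/
def optimalBlocks : Multiset (∀ i : Fin 2, Finset (Fin (![4, 8] i))) :=
  {pairTuple {0, 1} {0, 1}, pairTuple {2, 3} {1, 2}, pairTuple {0, 2} {3, 4},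
    pairTuple {1, 3} {4, 5}, pairTuple {0, 3} {6, 7}}

set_option maxRecDepth 10000 in
theorem optimalBlocks_nodup : optimalBlocks.Nodup := by decide

theorem mem_optimalBlocks {B : ∀ i : Fin 2, Finset (Fin (![4, 8] i))} :
    B ∈ optimalBlocks ↔ B = pairTuple {0, 1} {0, 1} ∨ B = pairTuple {2, 3} {1, 2} ∨
      B = pairTuple {0, 2} {3, 4} ∨ B = pairTuple {1, 3} {4, 5} ∨ B = pairTuple {0, 3} {6, 7} := by
  simp only [optimalBlocks, Multiset.insert_eq_cons, Multiset.mem_cons, Multiset.mem_singleton]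

theorem optimalBlocks_card_eq : ∀ B ∈ optimalBlocks, ∀ i, (B i).card = ![2, 2] i := by
  intro B hB
  rcases mem_optimalBlocks.1 hB with rfl | rfl | rfl | rfl | rfl <;> decide

theorem optimalBlocks_inter : ∀ B ∈ optimalBlocks, ∀ C ∈ optimalBlocks, B ≠ C →
    ∑ i, (B i ∩ C i).card ≤ 1 := by
  intro B hB C hC
  rcases mem_optimalBlocks.1 hB with rfl | rfl | rfl | rfl | rfl <;>
    rcases mem_optimalBlocks.1 hC with rfl | rfl | rfl | rfl | rfl <;> decide

theorem optimalBlocks_isGenPacking : IsGenPacking 2 1 ![4, 8] ![2, 2] optimalBlocks := by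
  refine ⟨optimalBlocks_card_eq, fun t' _ hsum T hT => ?_⟩
  -- The statement is first moved to the decidability instance found for `Fin 2`.
  suffices h : (optimalBlocks.filter (fun B => ∀ i, T i ⊆ B i)).card ≤ 1 by convert h
  rw [← Multiset.toFinset_card_of_nodup (optimalBlocks_nodup.filter _), Finset.card_le_one]
  intro B hB C hC
  rw [Multiset.mem_toFinset, Multiset.mem_filter] at hB hC
  by_contra hne
  have h1 := optimalBlocks_inter B hB.1 C hC.1 hne
  have h2 : ∑ i, t' i ≤ ∑ i, (B i ∩ C i).card := Finset.sum_le_sum fun i _ => by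
    rw [← hT i]
    exact Finset.card_le_card (Finset.subset_inter (hB.2 i) (hC.2 i))
  omega

section UpperBound

variable {P : Multiset (∀ i : Fin 2, Finset (Fin (![4, 8] i)))}

/-- The packing condition, for tuples written as pairs. -/
theorem IsGenPacking.filter_le (hP : IsGenPacking 2 1 ![4, 8] ![2, 2] P)
    (a : Finset (Fin 4)) (b : Finset (Fin 8)) (hab : a.card + b.card = 2) :
    (P.filter (fun B => ∀ i, pairTuple a b i ⊆ B i)).card ≤ 1 := by
  -- `convert` identifies the two decidability instances of the filter predicate.
  convert hP.2 ![a.card, b.card] ?_ ?_ (pairTuple a b) ?_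
  · intro i; fin_cases i <;> simp <;> omega
  · simpa using hab
  · intro i; fin_cases i <;> rfl

theorem IsGenPacking.eq_of_subset_s19 (hP : IsGenPacking 2 1 ![4, 8] ![2, 2] P)
    (a : Finset (Fin 4)) (b : Finset (Fin 8)) (hab : a.card + b.card = 2)
    {B C : ∀ i : Fin 2, Finset (Fin (![4, 8] i))} (hB : B ∈ P) (hC : C ∈ P)
    (hB0 : a ⊆ fstEdge B) (hB1 : b ⊆ sndEdge B) (hC0 : a ⊆ fstEdge C) (hC1 : b ⊆ sndEdge C) : B = C := by
  have h := hP.filter_le a b hab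
  have mB : B ∈ P.filter (fun B => ∀ i, pairTuple a b i ⊆ B i) :=
    Multiset.mem_filter.2 ⟨hB, fun i => by fin_cases i; exacts [hB0, hB1]⟩
  have mC : C ∈ P.filter (fun B => ∀ i, pairTuple a b i ⊆ B i) :=
    Multiset.mem_filter.2 ⟨hC, fun i => by fin_cases i; exacts [hC0, hC1]⟩
  obtain ⟨x, hx⟩ := Multiset.card_eq_one.1
    (le_antisymm h (Multiset.card_pos_iff_exists_mem.2 ⟨B, mB⟩))
  rw [hx, Multiset.mem_singleton] at mB mC
  rw [mB, mC]

theorem IsGenPacking.nodup_fst (hP : IsGenPacking 2 1 ![4, 8] ![2, 2] P) :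
    (P.map fstEdge).Nodup := by
  rw [Multiset.nodup_iff_count_le_one]
  intro a
  by_cases ha : a ∈ P.map fstEdge
  · obtain ⟨B, hB, rfl⟩ := Multiset.mem_map.1 ha
    rw [Multiset.count_map]
    refine le_trans (Multiset.card_le_card (Multiset.monotone_filter_right P ?_))
      (hP.filter_le (fstEdge B) ∅ (hP.1 B hB 0))
    intro C hC i
    fin_cases i
    · exact hC.subset
    · exact Finset.empty_subset _
  · rw [Multiset.count_eq_zero_of_notMem ha]
    exact zero_le_one

/-- There is no assignment of `K₈`-edges to the edges of `K₄` which is injective on each perfect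
matching and sends edges of different matchings to disjoint edges. -/
theorem no_six_edges (f : Finset (Fin 4) → Finset (Fin 8))
    (hcard : ∀ e, e.card = 2 → (f e).card = 2)
    (hne : ∀ e e', e.card = 2 → e'.card = 2 → e ≠ e' → f e ≠ f e')
    (hdis : ∀ e e', e.card = 2 → e'.card = 2 → e ≠ e' → ¬ Disjoint e e' →
      Disjoint (f e) (f e')) : False := by
  have three (e e' : Finset (Fin 4)) (he : e.card = 2) (he' : e'.card = 2) (h : e ≠ e') :
      3 ≤ (f e ∪ f e').card := by
    by_contra hlt
    have h1 := Finset.eq_of_subset_of_card_le (Finset.subset_union_left (s₁ := f e) (s₂ := f e'))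
      (by rw [hcard e he]; omega)
    have h2 := Finset.eq_of_subset_of_card_le (Finset.subset_union_right (s₁ := f e) (s₂ := f e'))
      (by rw [hcard e' he']; omega)
    exact hne e e' he he' h (h1.trans h2.symm)
  have a1 := three {0, 1} {2, 3} (by decide) (by decide) (by decide)
  have a2 := three {0, 2} {1, 3} (by decide) (by decide) (by decide)
  have a3 := three {0, 3} {1, 2} (by decide) (by decide) (by decide)
  have d12 : Disjoint (f {0, 1} ∪ f {2, 3}) (f {0, 2} ∪ f {1, 3}) := by
    simp only [Finset.disjoint_union_left, Finset.disjoint_union_right]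
    refine ⟨⟨?_, ?_⟩, ?_, ?_⟩ <;> exact hdis _ _ (by decide) (by decide) (by decide) (by decide)
  have d123 : Disjoint ((f {0, 1} ∪ f {2, 3}) ∪ (f {0, 2} ∪ f {1, 3})) (f {0, 3} ∪ f {1, 2}) := by
    simp only [Finset.disjoint_union_left, Finset.disjoint_union_right]
    refine ⟨⟨⟨?_, ?_⟩, ?_, ?_⟩, ⟨?_, ?_⟩, ?_, ?_⟩ <;>
      exact hdis _ _ (by decide) (by decide) (by decide) (by decide)
  have hle := Finset.card_le_univ
    (((f {0, 1} ∪ f {2, 3}) ∪ (f {0, 2} ∪ f {1, 3})) ∪ (f {0, 3} ∪ f {1, 2}))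
  rw [Finset.card_union_of_disjoint d123, Finset.card_union_of_disjoint d12, Fintype.card_fin] at hle
  omega

theorem IsGenPacking.card_le_five (hP : IsGenPacking 2 1 ![4, 8] ![2, 2] P) :
    Multiset.card P ≤ 5 := by
  by_contra hlt
  have hsub : (P.map fstEdge).toFinset ⊆
      Finset.powersetCard 2 Finset.univ := by
    intro a ha
    obtain ⟨B, hB, rfl⟩ := Multiset.mem_map.1 (Multiset.mem_toFinset.1 ha)
    exact Finset.mem_powersetCard.2 ⟨Finset.subset_univ _, hP.1 B hB 0⟩
  -- Six blocks exhaust the `choose 4 2 = 6` edges of `K₄`.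
  have heq := Finset.eq_of_subset_of_card_le hsub (by
    rw [Multiset.toFinset_card_of_nodup hP.nodup_fst, Multiset.card_map, Finset.card_powersetCard,
      Finset.card_univ, Fintype.card_fin, show Nat.choose 4 2 = 6 from rfl]
    omega)
  have hex : ∀ e : Finset (Fin 4), ∃ B : ∀ i : Fin 2, Finset (Fin (![4, 8] i)),
      e.card = 2 → B ∈ P ∧ fstEdge B = e := by
    intro e
    by_cases he : e.card = 2
    · have hmem : e ∈ Finset.powersetCard 2 Finset.univ :=
        Finset.mem_powersetCard.2 ⟨Finset.subset_univ _, he⟩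
      rw [← heq, Multiset.mem_toFinset, Multiset.mem_map] at hmem
      obtain ⟨B, hB⟩ := hmem
      exact ⟨B, fun _ => hB⟩
    · exact ⟨fun _ => ∅, fun h => absurd h he⟩
  choose g hg using hex
  have hgne : ∀ e e', e.card = 2 → e'.card = 2 → e ≠ e' → g e ≠ g e' := by
    intro e e' he he' hne h
    exact hne ((hg e he).2.symm.trans ((congrArg fstEdge h).trans (hg e' he').2))
  refine no_six_edges (fun e => sndEdge (g e)) (fun e he => hP.1 _ (hg e he).1 1) ?_ ?_
  · intro e e' he he' hne h
    refine hgne e e' he he' hne (hP.eq_of_subset_s19 ∅ (sndEdge (g e)) ?_ (hg e he).1 (hg e' he').1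
      (Finset.empty_subset _) subset_rfl (Finset.empty_subset _) h.subset)
    rw [Finset.card_empty, zero_add]
    exact hP.1 _ (hg e he).1 1
  · intro e e' he he' hne hmeet
    obtain ⟨x, hx, hx'⟩ := Finset.not_disjoint_iff.1 hmeet
    rw [Finset.disjoint_left]
    intro y hy hy'
    refine hgne e e' he he' hne (hP.eq_of_subset_s19 {x} {y} (by simp) (hg e he).1 (hg e' he').1
      ?_ (Finset.singleton_subset_iff.2 hy) ?_ (Finset.singleton_subset_iff.2 hy'))
    · exact Finset.singleton_subset_iff.2 ((hg e he).2.symm ▸ hx)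
    · exact Finset.singleton_subset_iff.2 ((hg e' he').2.symm ▸ hx')

end UpperBound

/-- for `𝐯 = (4,8)` and `𝐤 = (2,2)`, `D(𝐯,𝐤,2) = 5`. -/
theorem stmt19 : genPackingNumber (Fin 2) 2 1 ![4, 8] ![2, 2] = 5 := by
  refine IsGreatest.csSup_eq ⟨⟨optimalBlocks, optimalBlocks_isGenPacking, rfl⟩, ?_⟩
  rintro N ⟨P, hP, rfl⟩
  exact hP.card_le_five
end
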